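/- Suppose (x_n, y_n) is a positive solution of the system such that for some n₀ ≥ 0 one has x_{n₀-1} < α+1, x_{n₀} < α+1, x_{n₀+1} ≥ α+1, y_{n₀-1} < α+1, y_{n₀} < α+1, and y_{n₀+1} ≥ α+1. Then x_{n₀+2} > α+1, x_{n₀+3} > α+1, y_{n₀+2} > α+1, and y_{n₀+3} > α+1; i.e., the positive semi-cycle beginning at index n₀+1 has at least three terms. -/

import Mathlib

theorem add_one_lt_add_rpow_div_rpow {α r a b : ℝ} (hr : 0 < r) (ha : 0 < a) (hab : a < b) :
    α + 1 < α + b ^ r / a ^ r := by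
  have h : 1 < b ^ r / a ^ r :=
    (one_lt_div (Real.rpow_pos_of_pos ha r)).2 (Real.rpow_lt_rpow ha.le hab hr)
  linarith

theorem positive_semicycle_three_terms (α p q : ℝ) (hα : 0 < α) (hp : 0 < p) (hq : 0 < q)
    (x y : ℤ → ℝ)
    (hx0 : ∀ n : ℤ, -2 ≤ n → 0 < x n) (hy0 : ∀ n : ℤ, -2 ≤ n → 0 < y n)
    (hx : ∀ n : ℤ, 0 ≤ n → x (n + 1) = α + y n ^ p / y (n - 2) ^ p)
    (hy : ∀ n : ℤ, 0 ≤ n → y (n + 1) = α + x n ^ q / x (n - 2) ^ q)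
    (n₀ : ℤ) (hn₀ : 0 ≤ n₀)
    (h1 : x (n₀ - 1) < α + 1) (h2 : x n₀ < α + 1) (h3 : α + 1 ≤ x (n₀ + 1))
    (h4 : y (n₀ - 1) < α + 1) (h5 : y n₀ < α + 1) (h6 : α + 1 ≤ y (n₀ + 1)) :
    α + 1 < x (n₀ + 2) ∧ α + 1 < x (n₀ + 3) ∧
      α + 1 < y (n₀ + 2) ∧ α + 1 < y (n₀ + 3) := by
  have step_x (n : ℤ) (hn : 0 ≤ n) (h : y (n - 2) < y n) : α + 1 < x (n + 1) :=
    hx n hn ▸ add_one_lt_add_rpow_div_rpow hp (hy0 _ (by lia)) h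
  have step_y (n : ℤ) (hn : 0 ≤ n) (h : x (n - 2) < x n) : α + 1 < y (n + 1) :=
    hy n hn ▸ add_one_lt_add_rpow_div_rpow hq (hx0 _ (by lia)) h
  have e₁ : n₀ + 1 - 2 = n₀ - 1 := by ring
  have e₂ : n₀ + 1 + 1 = n₀ + 2 := by ring
  have e₃ : n₀ + 2 - 2 = n₀ := by ring
  have e₄ : n₀ + 2 + 1 = n₀ + 3 := by ring
  have hx₂ : α + 1 < x (n₀ + 2) := e₂ ▸ step_x (n₀ + 1) (by lia) (by rw [e₁]; linarith)
  have hy₂ : α + 1 < y (n₀ + 2) := e₂ ▸ step_y (n₀ + 1) (by lia) (by rw [e₁]; linarith)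
  exact ⟨hx₂, e₄ ▸ step_x (n₀ + 2) (by lia) (by rw [e₃]; linarith),
    hy₂, e₄ ▸ step_y (n₀ + 2) (by lia) (by rw [e₃]; linarith)⟩
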